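/- arXiv:1301.1235 — 3 statements merged into one kernel-verified Lean document; each statement's English description precedes it below -/
import Mathlib

section
/- Suppose A ⊆ V is such that the vector field ∑_{v∈A} ∂_{p_v} belongs to 𝓜. Then the vector field ∑_{v∈A} ∂_{q_v} also belongs to 𝓜. -/
/-!
Since a force depends only on positions, `X₀` is affine along momentum directions, so bracketing
with it turns a constant field `∑ v, w v • ∂_{p_v}` into
`∑ v, w v • ∂_{q_v} - ∑ v, γ v * w v • ∂_{p_v}`. As `γ` vanishes off `V*`, the second sum only
involves the generators of `𝓜`, and adding it back leaves `∑ v, w v • ∂_{q_v}`.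
-/

open scoped Classical
open Polynomial

noncomputable section

/-- Phase space ℝ^{2|V|}: positions `q = x.1` and momenta `p = x.2`. -/
abbrev Phase (V : Type) := (V → ℝ) × (V → ℝ)

/-- Lie bracket of vector fields: `[Y,Z](x) = DZ(x)·Y(x) − DY(x)·Z(x)`. -/
def lieB {V : Type} [Fintype V] (Y Z : Phase V → Phase V) : Phase V → Phase V :=
  fun x => fderiv ℝ Z x (Y x) - fderiv ℝ Y x (Z x)

/-- The constant vector field `∂_{p_v}`. -/
def dp {V : Type} [Fintype V] [DecidableEq V] (v : V) : Phase V → Phase V :=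
  fun _ => (0, Pi.single v 1)

/-- The constant vector field `∂_{q_v}`. -/
def dq {V : Type} [Fintype V] [DecidableEq V] (v : V) : Phase V → Phase V :=
  fun _ => (Pi.single v 1, 0)

/-- The constant vector field `∑_{v ∈ A} ∂_{p_v}`. -/
def dpSum {V : Type} [Fintype V] [DecidableEq V] (A : Finset V) : Phase V → Phase V :=
  fun _ => (0, ∑ v ∈ A, Pi.single v 1)

/-- The constant vector field `∑_{v ∈ A} ∂_{q_v}`. -/
def dqSum {V : Type} [Fintype V] [DecidableEq V] (A : Finset V) : Phase V → Phase V :=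
  fun _ => (∑ v ∈ A, Pi.single v 1, 0)

/-- The drift vector field
`X₀ = −∑_{v∈V*} γ_v p_v ∂_{p_v} + ∑_{v∈V} (p_v ∂_{q_v} − U_v'(q_v) ∂_{p_v})
      − ∑_{{u,v}∈E} V_{uv}'(q_u − q_v)(∂_{p_u} − ∂_{p_v})`,
written componentwise (using the symmetry `V_{vu}(x) = V_{uv}(−x)` of the
interaction potentials, the `∂_{p_v}`-component of the edge term at a vertex `v` is
`−∑_{w ~ v} V_{vw}'(q_v − q_w)`). -/
def X0 {V : Type} [Fintype V] [DecidableEq V] (G : SimpleGraph V) [DecidableRel G.Adj]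
    (γ : V → ℝ) (U : V → ℝ → ℝ) (Vp : V → V → Polynomial ℝ) : Phase V → Phase V :=
  fun x =>
    (x.2, fun v =>
      -(γ v) * x.2 v - deriv (U v) (x.1 v) -
        ∑ w ∈ Finset.univ.filter (fun w => G.Adj v w),
          (derivative (Vp v w)).eval (x.1 v - x.1 w))

/-- The smallest collection `𝓜` of vector fields on `ℝ^{2|V|}` that contains `∂_{p_v}`
for every `v ∈ V*`, and is closed under linear combinations, Lie brackets,
bracketing with `X₀`, and multiplication by smooth scalar functions. -/
inductive MM {V : Type} [Fintype V] [DecidableEq V] (Vstar : Finset V)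
    (X₀ : Phase V → Phase V) : (Phase V → Phase V) → Prop
  | basic (v : V) (hv : v ∈ Vstar) : MM Vstar X₀ (dp v)
  | add {Y Z : Phase V → Phase V} : MM Vstar X₀ Y → MM Vstar X₀ Z → MM Vstar X₀ (Y + Z)
  | smul (a : ℝ) {Y : Phase V → Phase V} : MM Vstar X₀ Y → MM Vstar X₀ (a • Y)
  | lie {Y Z : Phase V → Phase V} : MM Vstar X₀ Y → MM Vstar X₀ Z → MM Vstar X₀ (lieB Y Z)
  | lieX {Y : Phase V → Phase V} : MM Vstar X₀ Y → MM Vstar X₀ (lieB Y X₀)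
  | mulS (f : Phase V → ℝ) (hf : ContDiff ℝ (⊤ : ℕ∞) f) {Y : Phase V → Phase V} :
      MM Vstar X₀ Y → MM Vstar X₀ (fun x => f x • Y x)

/-- A vertex `v` is controllable if `∂_{q_v} ∈ 𝓜` and `∂_{p_v} ∈ 𝓜`. -/
def Controllable {V : Type} [Fintype V] [DecidableEq V] (Vstar : Finset V)
    (X₀ : Phase V → Phase V) (v : V) : Prop :=
  MM Vstar X₀ (dq v) ∧ MM Vstar X₀ (dp v)

/-- Two polynomials are equivalent if `f(·) = g(· + δ)` for some `δ ∈ ℝ`. -/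
def PolyEquiv (f g : Polynomial ℝ) : Prop :=
  ∃ δ : ℝ, ∀ x : ℝ, f.eval x = g.eval (x + δ)

namespace MM

variable {V : Type} [Fintype V] [DecidableEq V] {Vstar : Finset V} {X₀ : Phase V → Phase V}

-- `𝓜` is empty when `V*` is, so `0` does not come for free.
theorem zero_mem {Y : Phase V → Phase V} (hY : MM Vstar X₀ Y) : MM Vstar X₀ 0 := by
  simpa using hY.smul 0

theorem sum_mem (h₀ : MM Vstar X₀ 0) {ι : Type*} (s : Finset ι) {Y : ι → Phase V → Phase V}
    (hY : ∀ i ∈ s, MM Vstar X₀ (Y i)) : MM Vstar X₀ (∑ i ∈ s, Y i) :=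
  Finset.sum_induction Y _ (fun _ _ => MM.add) h₀ hY

theorem const_momentum_mem (h₀ : MM Vstar X₀ 0) {u : V → ℝ} (hu : ∀ v ∉ Vstar, u v = 0) :
    MM Vstar X₀ (fun _ => (0, u)) := by
  have hsum : (fun _ => (0, u)) = ∑ v ∈ Vstar, u v • dp v := by
    funext x
    ext v
    · simp [dp, Prod.fst_sum]
    · simpa [dp, Prod.snd_sum, Finset.sum_apply, Pi.single_apply] using hu v
  rw [hsum]
  exact sum_mem h₀ Vstar fun v hv => (MM.basic v hv).smul (u v)

end MM

/-- The drift of a damped mechanical system, `q' = p`, `p' = F q - γ p`, for an arbitrary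
position-dependent force `F` and a friction coefficient `γ v` at each coordinate `v`; the product
`γ * x.2` is coordinatewise. -/
def dampedDrift {V : Type} (γ : V → ℝ) (F : (V → ℝ) → V → ℝ) : Phase V → Phase V :=
  fun x => (x.2, F x.1 - γ * x.2)

/-- The non-dissipative force of the network: at each vertex, minus the derivative of the pinning
potential and of the interaction potentials of the incident edges. -/
def networkForce {V : Type} [Fintype V] (G : SimpleGraph V) [DecidableRel G.Adj]
    (U : V → ℝ → ℝ) (Vp : V → V → Polynomial ℝ) : (V → ℝ) → V → ℝ :=
  fun q v => -deriv (U v) (q v) -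
    ∑ w ∈ Finset.univ.filter (fun w => G.Adj v w), (derivative (Vp v w)).eval (q v - q w)

theorem X0_eq_dampedDrift {V : Type} [Fintype V] [DecidableEq V] (G : SimpleGraph V)
    [DecidableRel G.Adj] (γ : V → ℝ) (U : V → ℝ → ℝ) (Vp : V → V → Polynomial ℝ) :
    X0 G γ U Vp = dampedDrift γ (networkForce G U Vp) := by
  funext x
  ext v
  · rfl
  · simp only [X0, dampedDrift, networkForce, Pi.sub_apply, Pi.mul_apply]
    ring

theorem differentiable_networkForce {V : Type} [Fintype V] (G : SimpleGraph V) [DecidableRel G.Adj]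
    {U : V → ℝ → ℝ} (hU : ∀ v, Differentiable ℝ (deriv (U v))) (Vp : V → V → Polynomial ℝ) :
    Differentiable ℝ (networkForce G U Vp) := by
  refine differentiable_pi.2 fun v => ?_
  have hpin : Differentiable ℝ fun q : V → ℝ => deriv (U v) (q v) :=
    (hU v).comp (differentiable_apply v)
  have hedge (w : V) :
      Differentiable ℝ fun q : V → ℝ => (derivative (Vp v w)).eval (q v - q w) :=
    (derivative (Vp v w)).differentiable.comp
      ((differentiable_apply v).sub (differentiable_apply w))
  exact hpin.neg.sub (Differentiable.fun_sum fun w _ => hedge w)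

theorem fderiv_dampedDrift_momentum {V : Type} [Finite V] (γ : V → ℝ) {F : (V → ℝ) → V → ℝ}
    {x : Phase V} (hF : DifferentiableAt ℝ F x.1) (w : V → ℝ) :
    fderiv ℝ (dampedDrift γ F) x (0, w) = (w, -(γ * w)) := by
  cases nonempty_fintype V
  have hforce : HasFDerivAt (fun y : Phase V => F y.1)
      ((fderiv ℝ F x.1).comp (ContinuousLinearMap.fst ℝ (V → ℝ) (V → ℝ))) x :=
    hF.hasFDerivAt.comp x hasFDerivAt_fst
  have hdrift : HasFDerivAt (dampedDrift γ F) _ x :=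
    hasFDerivAt_snd.prodMk (hforce.sub (hasFDerivAt_snd.const_mul γ))
  simp [hdrift.fderiv]

theorem lieB_const {V : Type} [Fintype V] (c : Phase V) (Z : Phase V → Phase V) :
    lieB (fun _ => c) Z = fun x => fderiv ℝ Z x c := by
  funext x
  simp [lieB]

theorem lieB_const_momentum_dampedDrift {V : Type} [Fintype V] (γ : V → ℝ)
    {F : (V → ℝ) → V → ℝ} (hF : Differentiable ℝ F) (w : V → ℝ) :
    lieB (fun _ => (0, w)) (dampedDrift γ F) = fun _ => (w, -(γ * w)) := by
  rw [lieB_const]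
  exact funext fun x => fderiv_dampedDrift_momentum γ (hF x.1) w

theorem sum_dq_mem_of_sum_dp_mem_general {V : Type} [Fintype V] [DecidableEq V]
    {Vstar : Finset V} {γ : V → ℝ} (hγ : ∀ v ∉ Vstar, γ v = 0)
    {F : (V → ℝ) → V → ℝ} (hF : Differentiable ℝ F) {w : V → ℝ}
    (hw : MM Vstar (dampedDrift γ F) (fun _ => (0, w))) :
    MM Vstar (dampedDrift γ F) (fun _ => (w, 0)) := by
  have hbracket : MM Vstar (dampedDrift γ F) (fun _ => (w, -(γ * w))) :=
    lieB_const_momentum_dampedDrift γ hF w ▸ hw.lieX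
  have hfriction : MM Vstar (dampedDrift γ F) (fun _ => (0, γ * w)) :=
    hw.zero_mem.const_momentum_mem fun v hv => by simp [hγ v hv]
  simpa [Pi.add_def] using hbracket.add hfriction

/-- Lemma 3.1. If `∑_{v∈A} ∂_{p_v} ∈ 𝓜` then `∑_{v∈A} ∂_{q_v} ∈ 𝓜`. -/
theorem sum_dq_mem_of_sum_dp_mem
    {V : Type} [Fintype V] [DecidableEq V] (G : SimpleGraph V) [DecidableRel G.Adj]
    (Vstar : Finset V) (γ : V → ℝ) (U : V → ℝ → ℝ) (Vp : V → V → Polynomial ℝ)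
    (hγpos : ∀ v ∈ Vstar, 0 < γ v) (hγ0 : ∀ v ∉ Vstar, γ v = 0)
    (hU : ∀ v, ContDiff ℝ (⊤ : ℕ∞) (U v))
    (hsym : ∀ u v, G.Adj u v → ∀ x : ℝ, (Vp v u).eval x = (Vp u v).eval (-x))
    (hdeg : ∀ u v, G.Adj u v → 3 ≤ (Vp u v).natDegree)
    (A : Finset V)
    (hA : MM Vstar (X0 G γ U Vp) (dpSum A)) :
    MM Vstar (X0 G γ U Vp) (dqSum A) := by
  rw [X0_eq_dampedDrift] at hA ⊢
  exact sum_dq_mem_of_sum_dp_mem_general hγ0 (differentiable_networkForce G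
    (fun v => ((hU v).iterate_deriv 1).differentiable (by simp)) Vp) hA
end
end

section
/- Assume the vertex c is controllable. Then each equivalence class 𝒯_i of neighbors of c is jointly controllable, i.e. ∑_{v∈𝒯_i} ∂_{p_v} ∈ 𝓜 for every i. -/
open scoped Classical
open Polynomial

noncomputable section

/-- The set 𝒯 of neighbors ("targets") of a vertex `c`. -/
def Tset {V : Type} [Fintype V] [DecidableEq V] (G : SimpleGraph V) [DecidableRel G.Adj]
    (c : V) : Finset V :=
  Finset.univ.filter fun w => G.Adj c w

/-- The shift making a polynomial `g = ∑ a_i t^i/i!` of degree `k` adjusted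
(i.e. killing the coefficient `a_{k−1}`), namely `a_{k−1}/a_k = coeff_{k−1}/(k·coeff_k)`. -/
def adjShift (g : Polynomial ℝ) : ℝ :=
  g.coeff (g.natDegree - 1) / ((g.natDegree : ℝ) * g.leadingCoeff)

/-- The adjusted representation `g̃(·) = g(· − a_{k−1}/a_k)` of a polynomial `g`. -/
def adjRep (g : Polynomial ℝ) : Polynomial ℝ :=
  g.comp (Polynomial.X - Polynomial.C (adjShift g))

/-- `f̃_v`, the adjusted representation of `V''_{cv}`. -/
def ft {V : Type} (Vp : V → V → Polynomial ℝ) (c v : V) : Polynomial ℝ :=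
  adjRep (derivative (derivative (Vp c v)))

/-- `d = max_{v∈𝒯} d_v`, the maximal degree of the adjusted polynomials `f̃_v`, `v ∈ 𝒯`. -/
def dmax {V : Type} [Fintype V] [DecidableEq V] (G : SimpleGraph V) [DecidableRel G.Adj]
    (Vp : V → V → Polynomial ℝ) (c : V) : ℕ :=
  (Tset G c).sup fun v => (ft Vp c v).natDegree

/-- `D^d = {v ∈ 𝒯 : d_v = d}`, the neighbors of `c` of maximal adjusted degree. -/
def Dd {V : Type} [Fintype V] [DecidableEq V] (G : SimpleGraph V) [DecidableRel G.Adj]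
    (Vp : V → V → Polynomial ℝ) (c : V) : Finset V :=
  (Tset G c).filter fun v => (ft Vp c v).natDegree = dmax G Vp c

/-- The coefficient `b_{vℓ}` in `f̃_v(x) = ∑_j b_{vj} x^j/j!`, i.e. `b_{vℓ} = ℓ!·coeff_ℓ(f̃_v)`. -/
def bcoef {V : Type} (Vp : V → V → Polynomial ℝ) (c v : V) (ℓ : ℕ) : ℝ :=
  (Nat.factorial ℓ : ℝ) * (ft Vp c v).coeff ℓ

/-- The scalar function `x_v = q_c − q_v + δ_{cv}`, with `δ_{cv}` the adjusting shift
of `V''_{cv}`. -/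
def xv {V : Type} [Fintype V] (Vp : V → V → Polynomial ℝ) (c v : V) : Phase V → ℝ :=
  fun x => x.1 c - x.1 v + adjShift (derivative (derivative (Vp c v)))

/-!
Write `ξ_v = q_c - q_v + δ_v`, where `δ_v` is the adjusting shift of `V''_{cv}`, and identify a
vector field `∑_v F_v(ξ_v) ∂_{p_v}`, `F_c = 0`, with the polynomial `F` over the product algebra
`V → ℝ`. Bracketing with `∂_{q_c}` acts on such fields as `F ↦ F'`, and `[F, [G, X₀]]` is the field
of `(F G)'`, so the polynomials whose fields lie in `𝓜` form a space `𝓖` closed under these two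
operations. Up to a smooth multiple of `∂_{p_c}`, the bracket `[∂_{q_c}, X₀]` is the field of the
tuple of adjusted representatives, so that tuple belongs to `𝓖`.

The elements `a` with `a X ∈ 𝓖` form a subalgebra of `V → ℝ`, since `(a X b X)' = 2 a b X`. As the
adjusted tuple `F`, of maximal degree `d`, has no terms of degree `d - 1` in the entries of
degree `d`, differentiating it `d - 1` times and squaring shows that the squared leading
coefficients lie in this subalgebra; hence so does the indicator `e` of the entries of degree `d`.
The operator `H ↦ (e X H)'` then separates the monomials of `e F`, so that all coefficients of
`e F`, and the indicators of their joint level sets, belong to the subalgebra. This isolates the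
classes of degree `d`; removing `e F` from `F` leaves the classes of lower degree. Finally, two
polynomials are equivalent exactly when their adjusted representatives coincide.
-/

section PolynomialOperators

variable {K A M ι : Type*} [Field K]

theorem mem_of_sum_mem_of_apply_eq_smul [AddCommGroup M] [Module K M] {L : Module.End K M}
    {W : Submodule K M} (hW : W ≤ W.comap L) {s : Finset ι} {μ : ι → K} (hμ : Set.InjOn μ s)
    {x : ι → M} (hx : ∀ i ∈ s, L (x i) = μ i • x i) (hsum : ∑ i ∈ s, x i ∈ W) {j : ι}
    (hj : j ∈ s) : x j ∈ W := by
  set p : K[X] := Lagrange.basis s μ j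
  have hp : ∀ i ∈ s, aeval L p (x i) = p.eval (μ i) • x i := fun i hi =>
    Module.End.aeval_apply_of_mem_apply_eq_smul (hx i hi)
  have hproj : aeval L p (∑ i ∈ s, x i) = x j := by
    rw [map_sum, Finset.sum_eq_single_of_mem j hj, hp j hj, Lagrange.eval_basis_self hμ hj,
      one_smul]
    intro i hi hij
    rw [hp i hi, Lagrange.eval_basis_of_ne hij.symm hi, zero_smul]
  exact hproj ▸ aeval_apply_smul_mem_of_le_comap hsum p L hW

variable [CommRing A] [Algebra K A] {𝓖 : Submodule K A[X]}

/-- The closure properties inherited from the Lie algebra: those of bracketing with `∂_{q_c}`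
and of the double bracket with `X₀`, see `isDerivClosed_fieldSpace`. -/
structure IsDerivClosed (𝓖 : Submodule K A[X]) : Prop where
  derivative_mem : ∀ ⦃F⦄, F ∈ 𝓖 → derivative F ∈ 𝓖
  derivative_mul_mem : ∀ ⦃F⦄, F ∈ 𝓖 → ∀ ⦃G⦄, G ∈ 𝓖 → derivative (F * G) ∈ 𝓖

namespace IsDerivClosed

theorem iterate_derivative_mem (h : IsDerivClosed 𝓖) {F : A[X]} (hF : F ∈ 𝓖) (n : ℕ) :
    derivative^[n] F ∈ 𝓖 :=
  Set.MapsTo.iterate (s := (𝓖 : Set A[X])) h.derivative_mem n hF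

variable [CharZero K]

/-- The coefficients `a` with `a X ∈ 𝓖`. -/
def slopeAlgebra (h : IsDerivClosed 𝓖) : NonUnitalSubalgebra K A where
  carrier := {a | monomial 1 a ∈ 𝓖}
  add_mem' {a b} ha hb := by
    simpa only [Set.mem_ofPred_eq, map_add] using 𝓖.add_mem ha hb
  zero_mem' := by simp only [Set.mem_ofPred_eq, map_zero, 𝓖.zero_mem]
  smul_mem' k a ha := by
    simpa only [Set.mem_ofPred_eq, smul_monomial] using 𝓖.smul_mem k ha
  mul_mem' {a b} ha hb := by
    have hsq : derivative (monomial 1 a * monomial 1 b) = (2 : K) • monomial 1 (a * b) := by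
      rw [monomial_mul_monomial, derivative_monomial, smul_monomial, ofNat_smul_eq_nsmul]
      congr 1
      simp [mul_two, two_mul]
    exact (𝓖.smul_mem_iff two_ne_zero).1 (hsq ▸ h.derivative_mul_mem ha hb)

theorem mem_slopeAlgebra (h : IsDerivClosed 𝓖) {a : A} :
    a ∈ h.slopeAlgebra ↔ monomial 1 a ∈ 𝓖 :=
  Iff.rfl

theorem C_mem (h : IsDerivClosed 𝓖) {a : A} (ha : a ∈ h.slopeAlgebra) : C a ∈ 𝓖 := by
  simpa [derivative_monomial] using h.derivative_mem (h.mem_slopeAlgebra.1 ha)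

theorem mem_slopeAlgebra_of_monomial_mem (h : IsDerivClosed 𝓖) {a : A} {n : ℕ} (hn : 1 ≤ n)
    (ha : monomial n a ∈ 𝓖) : a ∈ h.slopeAlgebra := by
  induction n, hn using Nat.le_induction with
  | base => exact ha
  | succ n _ ih =>
    have hderiv : derivative (monomial (n + 1) a) = ((n + 1 : ℕ) : K) • monomial n a := by
      rw [derivative_monomial, smul_monomial, Nat.add_sub_cancel, Nat.cast_smul_eq_nsmul,
        nsmul_eq_mul, mul_comm]
    exact ih ((𝓖.smul_mem_iff (Nat.cast_ne_zero.2 n.succ_ne_zero)).1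
      (hderiv ▸ h.derivative_mem ha))

theorem mul_self_mem_slopeAlgebra (h : IsDerivClosed 𝓖) {a b : A} (hab : a * b = 0)
    (hmem : monomial 1 a + C b ∈ 𝓖) : a * a ∈ h.slopeAlgebra := by
  have hsq : derivative ((monomial 1 a + C b) * (monomial 1 a + C b)) =
      (2 : K) • monomial 1 (a * a) := by
    have hCab : C a * C b = 0 := by rw [← C_mul, hab, C_0]
    rw [ofNat_smul_eq_nsmul, ← C_mul_X_eq_monomial, ← C_mul_X_eq_monomial]
    simp only [derivative_mul, derivative_add, derivative_C, derivative_X, C_mul, nsmul_eq_mul,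
      Nat.cast_ofNat]
    linear_combination 2 * hCab
  exact (𝓖.smul_mem_iff two_ne_zero).1 (hsq ▸ h.derivative_mul_mem hmem hmem)

theorem coeff_mul_self_mem_slopeAlgebra (h : IsDerivClosed 𝓖) {F : A[X]} (hF : F ∈ 𝓖) {k : ℕ}
    (hdeg : F.natDegree ≤ k + 1) (hadj : F.coeff (k + 1) * F.coeff k = 0) :
    F.coeff (k + 1) * F.coeff (k + 1) ∈ h.slopeAlgebra := by
  have hlin : derivative^[k] F =
      monomial 1 ((k + 1).factorial • F.coeff (k + 1)) + C (k.factorial • F.coeff k) := by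
    ext i
    rw [coeff_iterate_derivative, coeff_add, coeff_monomial]
    rcases i with _ | _ | i
    · simp [Nat.descFactorial_self]
    · have hfact : (k + 1).descFactorial k = (k + 1).factorial := by
        simpa using Nat.factorial_mul_descFactorial k.le_succ
      simp [add_comm 1 k, hfact]
    · have hzero : F.coeff (i + 1 + 1 + k) = 0 := coeff_eq_zero_of_natDegree_lt (by omega)
      simp [hzero]
  have hsq := h.mul_self_mem_slopeAlgebra (by rw [smul_mul_smul_comm, hadj, smul_zero])
    (hlin ▸ h.iterate_derivative_mem hF k)
  rw [smul_mul_smul_comm, ← Nat.cast_smul_eq_nsmul K] at hsq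
  exact (h.slopeAlgebra.toSubmodule.smul_mem_iff (Nat.cast_ne_zero.2 (by positivity))).1 hsq

/-- The operator `F ↦ (e X F)'` has the eigenvectors `e a X ^ j` with distinct nonzero eigenvalues
`j + 1`, so it separates the monomials of `e F`. -/
theorem monomial_mul_coeff_mem (h : IsDerivClosed 𝓖) {e : A} (he : e ∈ h.slopeAlgebra)
    (hidem : IsIdempotentElem e) {F : A[X]} (hF : F ∈ 𝓖) (j : ℕ) :
    monomial j (e * F.coeff j) ∈ 𝓖 := by
  let L : Module.End K A[X] :=
    derivative.restrictScalars K ∘ₗ LinearMap.mulLeft K (monomial 1 e)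
  have hLinv : 𝓖 ≤ 𝓖.comap L := fun G hG => h.derivative_mul_mem he hG
  have hL : ∀ i a, L (monomial i a) = ((i + 1 : ℕ) : K) • monomial i (e * a) := by
    intro i a
    change derivative (monomial 1 e * monomial i a) = _
    rw [monomial_mul_monomial, derivative_monomial, smul_monomial, Nat.cast_smul_eq_nsmul,
      nsmul_eq_mul, mul_comm, add_comm 1 i, Nat.add_sub_cancel]
  let x : ℕ → A[X] := fun i => ((i + 1 : ℕ) : K) • monomial i (e * F.coeff i)
  have heigen : ∀ i, L (x i) = ((i + 1 : ℕ) : K) • x i := fun i => by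
    rw [map_smul, hL, ← mul_assoc, hidem.eq]
  have hsum : ∑ i ∈ Finset.range (F.natDegree + 1 + j), x i = L F := by
    conv_rhs => rw [F.as_sum_range' (F.natDegree + 1 + j) (by omega), map_sum]
    exact Finset.sum_congr rfl fun i _ => (hL i _).symm
  have hinj : Function.Injective fun i : ℕ => ((i + 1 : ℕ) : K) :=
    Nat.cast_injective.comp Nat.succ_injective
  have hx : x j ∈ 𝓖 := mem_of_sum_mem_of_apply_eq_smul hLinv hinj.injOn
    (fun i _ => heigen i) (hsum.symm ▸ hLinv hF : _ ∈ 𝓖)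
    (Finset.mem_range.2 (by omega : j < F.natDegree + 1 + j))
  exact (𝓖.smul_mem_iff (Nat.cast_ne_zero.2 j.succ_ne_zero)).1 hx

theorem C_mul_mem (h : IsDerivClosed 𝓖) {e : A} (he : e ∈ h.slopeAlgebra)
    (hidem : IsIdempotentElem e) {F : A[X]} (hF : F ∈ 𝓖) : C e * F ∈ 𝓖 := by
  rw [F.as_sum_range, Finset.mul_sum]
  refine 𝓖.sum_mem fun j _ => ?_
  rw [C_mul_monomial]
  exact h.monomial_mul_coeff_mem he hidem hF j

theorem mul_coeff_mem_slopeAlgebra (h : IsDerivClosed 𝓖) {e : A} (he : e ∈ h.slopeAlgebra)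
    (hidem : IsIdempotentElem e) {F : A[X]} (hF : F ∈ 𝓖) {j : ℕ} (hj : 1 ≤ j) :
    e * F.coeff j ∈ h.slopeAlgebra :=
  h.mem_slopeAlgebra_of_monomial_mem hj (h.monomial_mul_coeff_mem he hidem hF j)

theorem mul_coeff_zero_mul_coeff_mem_slopeAlgebra (h : IsDerivClosed 𝓖) {e : A}
    (he : e ∈ h.slopeAlgebra) (hidem : IsIdempotentElem e) {F : A[X]} (hF : F ∈ 𝓖) {d : ℕ}
    (hd : 2 ≤ d) :
    e * F.coeff 0 * F.coeff d ∈ h.slopeAlgebra := by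
  have hmem := h.derivative_mul_mem (h.monomial_mul_coeff_mem he hidem hF 0)
    (h.monomial_mul_coeff_mem he hidem hF d)
  have hderiv : derivative (monomial 0 (e * F.coeff 0) * monomial d (e * F.coeff d)) =
      (d : K) • monomial (d - 1) (e * F.coeff 0 * F.coeff d) := by
    rw [monomial_mul_monomial, zero_add, derivative_monomial, smul_monomial,
      Nat.cast_smul_eq_nsmul, nsmul_eq_mul, mul_mul_mul_comm, hidem.eq, mul_comm, mul_assoc e]
  exact h.mem_slopeAlgebra_of_monomial_mem (Nat.le_sub_one_of_lt hd)
    ((𝓖.smul_mem_iff (Nat.cast_ne_zero.2 (by omega))).1 (hderiv ▸ hmem))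

end IsDerivClosed

end PolynomialOperators

section ProductAlgebra

variable {K A ι : Type*} [Field K]

theorem aeval_mul_self_mem [CommRing A] [Algebra K A] {B : NonUnitalSubalgebra K A} {a : A}
    (ha : a ∈ B) (p : K[X]) : aeval a p * a ∈ B := by
  induction p using Polynomial.induction_on' with
  | add p q hp hq => simpa only [map_add, add_mul] using add_mem hp hq
  | monomial n r =>
    have hpow : a ^ n * a ∈ B := by
      induction n with
      | zero => simpa using ha
      | succ n ih => simpa only [pow_succ] using mul_mem ih ha
    simpa only [aeval_monomial, mul_assoc, Algebra.smul_def] using SMulMemClass.smul_mem r hpow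

theorem isIdempotentElem_indicator_one (s : Set ι) :
    IsIdempotentElem (s.indicator (1 : ι → K)) := by
  ext v
  by_cases hv : v ∈ s <;> simp [hv]

variable [Finite ι] {B : NonUnitalSubalgebra K (ι → K)} {s : Set ι}

/-- Here `0⁻¹ = 0` is what makes the pointwise inverse a polynomial without constant term. -/
theorem inv_mem_nonUnitalSubalgebra {a : ι → K} (ha : a ∈ B) : a⁻¹ ∈ B := by
  cases nonempty_fintype ι
  let q : K[X] := Lagrange.interpolate (Finset.univ.image a) id fun x => x⁻¹ * x⁻¹
  have hq : ∀ v, q.eval (a v) = (a v)⁻¹ * (a v)⁻¹ := fun v =>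
    Lagrange.eval_interpolate_at_node (v := id) _ Function.injective_id.injOn
      (Finset.mem_image_of_mem a (Finset.mem_univ v))
  have hinv : a⁻¹ = aeval a q * a := by
    ext v
    by_cases hv : a v = 0
    · simp [hv]
    · simp [hq, hv]
  exact hinv ▸ aeval_mul_self_mem ha q

theorem indicator_support_mem {a : ι → K} (ha : a ∈ B) :
    (Function.support a).indicator 1 ∈ B := by
  have hmul : (Function.support a).indicator 1 = a * a⁻¹ := by
    ext v
    by_cases hv : a v = 0 <;> simp [hv]
  exact hmul ▸ mul_mem ha (inv_mem_nonUnitalSubalgebra ha)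

theorem indicator_inter_eq_mem (hs : s.indicator 1 ∈ B) {a : ι → K} (ha : s.indicator a ∈ B)
    (x : K) : (s ∩ {v | a v = x}).indicator 1 ∈ B := by
  have hmem := sub_mem hs (indicator_support_mem (sub_mem ha (SMulMemClass.smul_mem x hs)))
  convert hmem using 1
  ext v
  by_cases hv : v ∈ s
  · by_cases hx : a v = x <;> simp [hv, hx, sub_eq_zero]
  · simp [hv]

theorem indicator_inter_forall_eq_mem {J : Type*} (hs : s.indicator 1 ∈ B) {a : J → ι → K}
    (ha : ∀ j, s.indicator (a j) ∈ B) (x : J → K) (t : Finset J) :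
    (s ∩ {v | ∀ j ∈ t, a j v = x j}).indicator 1 ∈ B := by
  induction t using Finset.induction_on with
  | empty => simpa using hs
  | insert j t _ ih =>
    have haj : (s ∩ {v | ∀ j ∈ t, a j v = x j}).indicator (a j) ∈ B := by
      convert mul_mem ih (ha j) using 1
      ext v
      by_cases hv : v ∈ s <;> simp [hv, Set.indicator_apply]
    convert indicator_inter_eq_mem ih haj (x j) using 2
    ext v
    simp only [Finset.mem_insert, forall_eq_or_imp, Set.mem_inter_iff, Set.mem_ofPred_eq]
    tauto

end ProductAlgebra

section ClassSeparation

variable {K ι : Type*} [Field K] [Finite ι]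

/-- The tuple `f` as one polynomial with coefficients in the product algebra `ι → K`. -/
def tuplePoly (f : ι → K[X]) : (ι → K)[X] :=
  (piEquiv fun _ => K).symm f

theorem map_tuplePoly (f : ι → K[X]) (v : ι) :
    (tuplePoly f).map (Pi.evalRingHom (fun _ => K) v) = f v :=
  congrFun ((piEquiv fun _ => K).apply_symm_apply f) v

theorem coeff_tuplePoly (f : ι → K[X]) (n : ℕ) (v : ι) :
    (tuplePoly f).coeff n v = (f v).coeff n := by
  rw [← map_tuplePoly f v, coeff_map, Pi.evalRingHom_apply]

theorem eval_tuplePoly (f : ι → K[X]) (a : ι → K) (v : ι) :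
    (tuplePoly f).eval a v = (f v).eval (a v) := by
  rw [← map_tuplePoly f v]
  exact (eval_map_apply (Pi.evalRingHom (fun _ => K) v) a).symm

theorem natDegree_tuplePoly_le {f : ι → K[X]} {d : ℕ} (hdeg : ∀ v, (f v).natDegree ≤ d) :
    (tuplePoly f).natDegree ≤ d :=
  natDegree_le_iff_coeff_eq_zero.2 fun n hn => funext fun v => by
    rw [coeff_tuplePoly, Pi.zero_apply]
    exact coeff_eq_zero_of_natDegree_lt ((hdeg v).trans_lt hn)

theorem tuplePoly_indicator_compl (f : ι → K[X]) (s : Set ι) :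
    tuplePoly (sᶜ.indicator f) = tuplePoly f - C (s.indicator 1) * tuplePoly f := by
  ext n v
  by_cases hv : v ∈ s <;> simp [hv, coeff_tuplePoly]

/-- The term of second highest degree vanishes. Subtraction is truncated, so the only adjusted
constant is `0`. -/
def IsAdjusted {R : Type*} [Semiring R] (p : R[X]) : Prop :=
  p.coeff (p.natDegree - 1) = 0

theorem IsAdjusted.coeff_succ_mul_coeff {R : Type*} [Semiring R] {p : R[X]} (hp : IsAdjusted p)
    {k : ℕ} (hdeg : p.natDegree ≤ k + 1) : p.coeff (k + 1) * p.coeff k = 0 := by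
  rcases hdeg.lt_or_eq with hlt | heq
  · rw [coeff_eq_zero_of_natDegree_lt hlt, zero_mul]
  · have hcoeff : p.coeff k = 0 := by simpa [IsAdjusted, heq] using hp
    rw [hcoeff, mul_zero]

theorem IsAdjusted.eq_zero_of_natDegree_eq_zero {R : Type*} [Semiring R] {p : R[X]}
    (hp : IsAdjusted p) (hdeg : p.natDegree = 0) : p = 0 := by
  have hcoeff : p.coeff 0 = 0 := by simpa [IsAdjusted, hdeg] using hp
  rw [eq_C_of_natDegree_eq_zero hdeg, hcoeff, C_0]

namespace IsDerivClosed

variable [CharZero K] {𝓖 : Submodule K (ι → K)[X]} (h : IsDerivClosed 𝓖) {f : ι → K[X]} {k : ℕ}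

theorem indicator_topDegree_mem (hf : tuplePoly f ∈ 𝓖) (hadj : ∀ v, IsAdjusted (f v))
    (hdeg : ∀ v, (f v).natDegree ≤ k + 1) :
    {v | (f v).coeff (k + 1) ≠ 0}.indicator 1 ∈ h.slopeAlgebra := by
  have hprod : (tuplePoly f).coeff (k + 1) * (tuplePoly f).coeff k = 0 := funext fun v => by
    simpa only [Pi.mul_apply, Pi.zero_apply, coeff_tuplePoly] using
      (hadj v).coeff_succ_mul_coeff (hdeg v)
  convert indicator_support_mem
    (h.coeff_mul_self_mem_slopeAlgebra hf (natDegree_tuplePoly_le hdeg) hprod) using 2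
  ext v
  simp [coeff_tuplePoly]

theorem indicator_coeff_mem (hf : tuplePoly f ∈ 𝓖) (hadj : ∀ v, IsAdjusted (f v))
    (hdeg : ∀ v, (f v).natDegree ≤ k + 1) (j : ℕ) :
    {v | (f v).coeff (k + 1) ≠ 0}.indicator (fun v => (f v).coeff j) ∈ h.slopeAlgebra := by
  set s : Set ι := {v | (f v).coeff (k + 1) ≠ 0}
  have he : s.indicator 1 ∈ h.slopeAlgebra := h.indicator_topDegree_mem hf hadj hdeg
  have hidem : IsIdempotentElem (s.indicator (1 : ι → K)) := isIdempotentElem_indicator_one s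
  have hmul : ∀ i, s.indicator 1 * (tuplePoly f).coeff i = s.indicator fun v => (f v).coeff i := by
    intro i
    ext v
    by_cases hv : v ∈ s <;> simp [hv, coeff_tuplePoly]
  have hpos : ∀ {i}, 1 ≤ i → s.indicator (fun v => (f v).coeff i) ∈ h.slopeAlgebra :=
    fun {i} hi => hmul i ▸ h.mul_coeff_mem_slopeAlgebra he hidem hf hi
  rcases Nat.eq_zero_or_pos j with rfl | hj
  · rcases Nat.eq_zero_or_pos k with rfl | hk
    · have hzero : s.indicator (fun v => (f v).coeff 0) = 0 := by
        refine Set.indicator_eq_zero'.2 (Set.disjoint_left.2 fun v hv hvs => hv ?_)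
        exact (mul_eq_zero.1 ((hadj v).coeff_succ_mul_coeff (hdeg v))).resolve_left hvs
      exact hzero ▸ zero_mem _
    · have hmem := mul_mem (h.mul_coeff_zero_mul_coeff_mem_slopeAlgebra he hidem hf
        (by omega : 2 ≤ k + 1)) (inv_mem_nonUnitalSubalgebra (hpos (by omega : 1 ≤ k + 1)))
      convert hmem using 1
      ext v
      by_cases hv : (f v).coeff (k + 1) = 0 <;> simp [s, hv, coeff_tuplePoly]
  · exact hpos hj

theorem indicator_class_mem_of_topDegree (hf : tuplePoly f ∈ 𝓖) (hadj : ∀ v, IsAdjusted (f v))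
    (hdeg : ∀ v, (f v).natDegree ≤ k + 1) {v₀ : ι} (hv₀ : (f v₀).coeff (k + 1) ≠ 0) :
    {v | f v = f v₀}.indicator 1 ∈ h.slopeAlgebra := by
  convert indicator_inter_forall_eq_mem (h.indicator_topDegree_mem hf hadj hdeg)
    (h.indicator_coeff_mem hf hadj hdeg) (fun j => (f v₀).coeff j) (Finset.range (k + 2)) using 2
  ext v
  simp only [Set.mem_inter_iff, Set.mem_ofPred_eq, Finset.mem_range]
  refine ⟨fun hv => ⟨hv ▸ hv₀, fun j _ => by rw [hv]⟩, fun hv => ?_⟩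
  exact (ext_iff_natDegree_le (n := k + 1) (hdeg v) (hdeg v₀)).2 fun j hj => hv.2 j (by omega)

theorem indicator_class_mem {d : ℕ} (hf : tuplePoly f ∈ 𝓖) (hadj : ∀ v, IsAdjusted (f v))
    (hdeg : ∀ v, (f v).natDegree ≤ d) {v₀ : ι} (hv₀ : f v₀ ≠ 0) :
    {v | f v = f v₀}.indicator 1 ∈ h.slopeAlgebra := by
  induction d generalizing f with
  | zero => exact absurd ((hadj v₀).eq_zero_of_natDegree_eq_zero (Nat.le_zero.1 (hdeg v₀))) hv₀
  | succ k ih =>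
    by_cases htop : (f v₀).coeff (k + 1) = 0
    · set s : Set ι := {v | (f v).coeff (k + 1) ≠ 0}
      let g : ι → K[X] := sᶜ.indicator f
      have hg : tuplePoly g ∈ 𝓖 := by
        rw [tuplePoly_indicator_compl]
        exact 𝓖.sub_mem hf (h.C_mul_mem (h.indicator_topDegree_mem hf hadj hdeg)
          (isIdempotentElem_indicator_one s) hf)
      have hg_apply : ∀ v, (f v).coeff (k + 1) = 0 ∧ g v = f v ∨
          (f v).coeff (k + 1) ≠ 0 ∧ g v = 0 := fun v => by
        by_cases hv : (f v).coeff (k + 1) = 0 <;> simp [g, s, hv]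
      have hgv₀ : g v₀ = f v₀ := Set.indicator_of_mem (not_not.2 htop) f
      convert ih hg (fun v => ?_) (fun v => ?_) (hgv₀ ▸ hv₀) using 2
      · ext v
        rw [Set.mem_ofPred_eq, Set.mem_ofPred_eq, hgv₀]
        rcases hg_apply v with ⟨_, hv⟩ | ⟨hne, hv⟩
        · rw [hv]
        · rw [hv]
          exact iff_of_false (fun hfv => hne (hfv ▸ htop)) (Ne.symm hv₀)
      · rcases hg_apply v with ⟨_, hv⟩ | ⟨_, hv⟩
        · exact hv ▸ hadj v
        · simp [hv, IsAdjusted]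
      · rcases hg_apply v with ⟨hzero, hv⟩ | ⟨_, hv⟩
        · rw [hv]
          exact natDegree_le_pred (hdeg v) hzero
        · simp [hv]
    · exact h.indicator_class_mem_of_topDegree hf hadj hdeg htop

end IsDerivClosed

end ClassSeparation

section AdjustedRepresentative

theorem coeff_taylor_natDegree_pred {R : Type*} [CommSemiring R] (r : R) {p : R[X]}
    (hp : 1 ≤ p.natDegree) :
    (taylor r p).coeff (p.natDegree - 1) =
      p.coeff (p.natDegree - 1) + r * (p.natDegree * p.leadingCoeff) := by
  obtain ⟨n, hn⟩ := Nat.exists_eq_add_of_le' hp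
  have hlt : (hasseDeriv n p).natDegree < 2 := by
    have := natDegree_hasseDeriv_le p n
    omega
  rw [taylor_coeff, hn, Nat.add_sub_cancel, eval_eq_sum_range' hlt, leadingCoeff, hn]
  simp only [Finset.sum_range_succ, Finset.sum_range_zero, hasseDeriv_coeff]
  simp [add_comm 1 n, mul_comm]

theorem adjRep_eq_taylor (g : ℝ[X]) : adjRep g = taylor (-adjShift g) g := by
  rw [adjRep, taylor_apply, C_neg, sub_eq_add_neg]

theorem eval_adjRep (g : ℝ[X]) (t : ℝ) : (adjRep g).eval (t + adjShift g) = g.eval t := by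
  rw [adjRep_eq_taylor, taylor_eval, add_neg_cancel_right]

theorem natDegree_adjRep (g : ℝ[X]) : (adjRep g).natDegree = g.natDegree := by
  rw [adjRep_eq_taylor, natDegree_taylor]

theorem adjShift_taylor (δ : ℝ) {g : ℝ[X]} (hg : 1 ≤ g.natDegree) :
    adjShift (taylor δ g) = adjShift g + δ := by
  have hnat : (g.natDegree : ℝ) ≠ 0 := by positivity
  have hlead : g.leadingCoeff ≠ 0 := leadingCoeff_ne_zero.2 (ne_zero_of_natDegree_gt hg)
  rw [adjShift, adjShift, natDegree_taylor, leadingCoeff_taylor, coeff_taylor_natDegree_pred δ hg]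
  field_simp

theorem isAdjusted_adjRep {g : ℝ[X]} (hg : 1 ≤ g.natDegree) : IsAdjusted (adjRep g) := by
  have hnat : (g.natDegree : ℝ) ≠ 0 := by positivity
  have hlead : g.leadingCoeff ≠ 0 := leadingCoeff_ne_zero.2 (ne_zero_of_natDegree_gt hg)
  rw [IsAdjusted, natDegree_adjRep, adjRep_eq_taylor, coeff_taylor_natDegree_pred _ hg, adjShift]
  field_simp
  ring

theorem polyEquiv_iff_exists_taylor_eq {f g : ℝ[X]} : PolyEquiv f g ↔ ∃ δ, f = taylor δ g :=
  exists_congr fun δ =>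
    ⟨fun h => Polynomial.funext fun x => by rw [taylor_eval, h], fun h x => by rw [h, taylor_eval]⟩

theorem polyEquiv_iff_adjRep_eq {f g : ℝ[X]} (hg : 1 ≤ g.natDegree) :
    PolyEquiv f g ↔ adjRep f = adjRep g := by
  rw [polyEquiv_iff_exists_taylor_eq]
  constructor
  · rintro ⟨δ, rfl⟩
    rw [adjRep_eq_taylor, adjShift_taylor δ hg, adjRep_eq_taylor, taylor_taylor,
      neg_add, neg_add_cancel_right]
  · intro h
    refine ⟨adjShift f - adjShift g, taylor_injective (-adjShift f) ?_⟩
    rw [← adjRep_eq_taylor, h, adjRep_eq_taylor, taylor_taylor, sub_eq_add_neg,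
      neg_add_cancel_left]

theorem one_le_natDegree_derivative_derivative {p : ℝ[X]} (hp : 3 ≤ p.natDegree) :
    1 ≤ (derivative (derivative p)).natDegree := by
  rw [natDegree_derivative, natDegree_derivative]
  omega

theorem eval_derivative_derivative_of_eval_eq_eval_neg {p q : ℝ[X]}
    (h : ∀ x, p.eval x = q.eval (-x)) (x : ℝ) :
    (derivative (derivative p)).eval x = (derivative (derivative q)).eval (-x) := by
  have hpq : p = q.comp (-X) := Polynomial.funext fun x => by simp [h]
  simp [hpq, derivative_comp]

end AdjustedRepresentative

section VectorFields

theorem hasFDerivAt_polynomial_eval {𝕜 A : Type*} [NontriviallyNormedField 𝕜] [NormedCommRing A]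
    [NormedAlgebra 𝕜 A] (p : A[X]) (a : A) :
    HasFDerivAt (𝕜 := 𝕜) (fun a => p.eval a)
      (ContinuousLinearMap.mul 𝕜 A ((derivative p).eval a)) a := by
  induction p using Polynomial.induction_on' with
  | add p q hp hq => simpa only [eval_add, derivative_add, map_add] using hp.fun_add hq
  | monomial n r =>
    simp only [eval_monomial, derivative_monomial]
    refine ((hasFDerivAt_pow (𝕜 := 𝕜) n).const_mul r).congr_fderiv ?_
    ext b
    simp [mul_assoc]

variable {V : Type}

/-- The linear map `q ↦ (q_c - q_v)_v`. -/
def gap (c : V) : (V → ℝ) →L[ℝ] V → ℝ :=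
  (ContinuousLinearMap.proj c).smulRight 1 - ContinuousLinearMap.id ℝ (V → ℝ)

theorem gap_apply (c : V) (q : V → ℝ) (v : V) : gap c q v = q c - q v := by
  simp [gap]

theorem gap_eq_neg {c : V} {q : V → ℝ} (hq : q c = 0) : gap c q = -q := by
  ext v
  rw [gap_apply, hq, zero_sub, Pi.neg_apply]

theorem eval_apply_eq_zero {c : V} {F : (V → ℝ)[X]}
    (hF : F.map (Pi.evalRingHom (fun _ => ℝ) c) = 0) (a : V → ℝ) :
    F.eval a c = 0 := by
  simpa [hF] using (eval_map_apply (p := F) (Pi.evalRingHom (fun _ => ℝ) c) a).symm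

variable [Fintype V]

theorem lieB_apply_of_hasFDerivAt {Y Z : Phase V → Phase V} {Y' Z' : Phase V →L[ℝ] Phase V}
    {x : Phase V} (hY : HasFDerivAt Y Y' x) (hZ : HasFDerivAt Z Z' x) :
    lieB Y Z x = Z' (Y x) - Y' (Z x) := by
  rw [lieB, hY.fderiv, hZ.fderiv]

/-- The vector field `∑_v F_v(q_c - q_v + δ_v) ∂_{p_v}`, where the tuple `F` of polynomials is
regarded as one polynomial over the product algebra `V → ℝ`. -/
def polyField (c : V) (δ : V → ℝ) (F : (V → ℝ)[X]) : Phase V → Phase V :=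
  fun x => (0, F.eval (gap c x.1 + δ))

/-- The drift of Newton's equations with damping `γ` and force `-Φ`. -/
def dampedField (γ : V → ℝ) (Φ : (V → ℝ) → V → ℝ) : Phase V → Phase V :=
  fun x => (x.2, -γ * x.2 - Φ x.1)

variable {c : V} {δ γ : V → ℝ} {F H : (V → ℝ)[X]} {Φ : (V → ℝ) → V → ℝ} {x : Phase V}

theorem hasFDerivAt_eval_gap (c : V) (δ : V → ℝ) (F : (V → ℝ)[X]) (x : Phase V) :
    HasFDerivAt (fun x : Phase V => F.eval (gap c x.1 + δ))
      (ContinuousLinearMap.mul ℝ (V → ℝ) ((derivative F).eval (gap c x.1 + δ)) ∘L gap c ∘L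
        ContinuousLinearMap.fst ℝ (V → ℝ) (V → ℝ)) x :=
  (hasFDerivAt_polynomial_eval F _).comp x
    (((gap c).hasFDerivAt.comp x hasFDerivAt_fst).add_const δ)

theorem hasFDerivAt_polyField (c : V) (δ : V → ℝ) (F : (V → ℝ)[X]) (x : Phase V) :
    HasFDerivAt (polyField c δ F)
      ((0 : Phase V →L[ℝ] V → ℝ).prod
        (ContinuousLinearMap.mul ℝ (V → ℝ) ((derivative F).eval (gap c x.1 + δ)) ∘L gap c ∘L
          ContinuousLinearMap.fst ℝ (V → ℝ) (V → ℝ))) x :=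
  (hasFDerivAt_const 0 x).prodMk (hasFDerivAt_eval_gap c δ F x)

theorem hasFDerivAt_dampedField (γ : V → ℝ) {Φ' : (V → ℝ) →L[ℝ] V → ℝ}
    (hΦ : HasFDerivAt Φ Φ' x.1) :
    HasFDerivAt (dampedField γ Φ)
      ((ContinuousLinearMap.snd ℝ (V → ℝ) (V → ℝ)).prod
        (ContinuousLinearMap.mul ℝ (V → ℝ) (-γ) ∘L ContinuousLinearMap.snd ℝ (V → ℝ) (V → ℝ) -
          Φ' ∘L ContinuousLinearMap.fst ℝ (V → ℝ) (V → ℝ))) x :=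
  hasFDerivAt_snd.prodMk
    (((ContinuousLinearMap.mul ℝ (V → ℝ) (-γ)).hasFDerivAt.comp x hasFDerivAt_snd).sub
      (hΦ.comp x hasFDerivAt_fst))

theorem lieB_polyField_dampedField (c : V) (δ γ : V → ℝ) (F : (V → ℝ)[X])
    (hΦ : Differentiable ℝ Φ) :
    lieB (polyField c δ F) (dampedField γ Φ) = fun x =>
      (F.eval (gap c x.1 + δ),
        -γ * F.eval (gap c x.1 + δ) - (derivative F).eval (gap c x.1 + δ) * gap c x.2) := by
  funext x
  rw [lieB_apply_of_hasFDerivAt (hasFDerivAt_polyField c δ F x)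
    (hasFDerivAt_dampedField γ (hΦ x.1).hasFDerivAt)]
  ext v <;> simp [polyField, dampedField]

/-- The brackets contribute `H F'` and `H' F`, which combine to `(H F)'`. -/
theorem lieB_polyField_lieB_dampedField (γ : V → ℝ) (δ : V → ℝ)
    (hH : H.map (Pi.evalRingHom (fun _ => ℝ) c) = 0)
    (hF : F.map (Pi.evalRingHom (fun _ => ℝ) c) = 0) (hΦ : Differentiable ℝ Φ) :
    lieB (polyField c δ H) (lieB (polyField c δ F) (dampedField γ Φ)) =
      polyField c δ (derivative (H * F)) := by
  funext x
  have hgap_snd : HasFDerivAt (fun x : Phase V => gap c x.2)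
      (gap c ∘L ContinuousLinearMap.snd ℝ (V → ℝ) (V → ℝ)) x :=
    (gap c).hasFDerivAt.comp x hasFDerivAt_snd
  have hZ := (hasFDerivAt_eval_gap c δ F x).prodMk
    (((hasFDerivAt_eval_gap c δ F x).const_mul (-γ)).fun_sub
      ((hasFDerivAt_eval_gap c δ (derivative F) x).fun_mul hgap_snd))
  rw [lieB_polyField_dampedField c δ γ F hΦ,
    lieB_apply_of_hasFDerivAt (hasFDerivAt_polyField c δ H x) hZ]
  have hgapH := gap_eq_neg (eval_apply_eq_zero hH (gap c x.1 + δ))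
  have hgapF := gap_eq_neg (eval_apply_eq_zero hF (gap c x.1 + δ))
  ext v
  · simp [polyField]
  · simp [polyField, hgapH, hgapF, derivative_mul]
    ring

variable [DecidableEq V]

theorem lieB_dq_apply_of_hasFDerivAt {Z : Phase V → Phase V} {Z' : Phase V →L[ℝ] Phase V}
    (hZ : HasFDerivAt Z Z' x) : lieB (dq c) Z x = Z' (Pi.single c 1, 0) := by
  rw [lieB_apply_of_hasFDerivAt (Y := dq c) (hasFDerivAt_const _ x) hZ, zero_apply, sub_zero]
  rfl

theorem lieB_dq_polyField (δ : V → ℝ) (hF : F.map (Pi.evalRingHom (fun _ => ℝ) c) = 0) :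
    lieB (dq c) (polyField c δ F) = polyField c δ (derivative F) := by
  have hF' : (derivative F).map (Pi.evalRingHom (fun _ => ℝ) c) = 0 := by
    rw [← derivative_map, hF, derivative_zero]
  funext x
  rw [lieB_dq_apply_of_hasFDerivAt (hasFDerivAt_polyField c δ F x)]
  ext v
  · simp [polyField]
  · rcases eq_or_ne v c with rfl | hv
    · simp [polyField, eval_apply_eq_zero hF']
    · simp [polyField, gap_apply, hv]

theorem lieB_dq_dampedField (γ : V → ℝ) {Φ' : (V → ℝ) → (V → ℝ) →L[ℝ] V → ℝ}
    (hΦ : ∀ q, HasFDerivAt Φ (Φ' q) q) :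
    lieB (dq c) (dampedField γ Φ) = fun x => (0, -Φ' x.1 (Pi.single c 1)) := by
  funext x
  rw [lieB_dq_apply_of_hasFDerivAt (hasFDerivAt_dampedField γ (hΦ x.1))]
  simp

end VectorFields

section FieldSpace

variable {V : Type} [Fintype V] [DecidableEq V] {Vstar : Finset V} {X₀ : Phase V → Phase V} {c : V}

theorem MM.zero {Y : Phase V → Phase V} (hY : MM Vstar X₀ Y) : MM Vstar X₀ 0 :=
  zero_smul ℝ Y ▸ hY.smul 0

/-- The polynomials `F` with `F_c = 0` whose vector field belongs to `𝓜`. -/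
def fieldSpace (δ : V → ℝ) (hc : MM Vstar X₀ (dp c)) : Submodule ℝ (V → ℝ)[X] where
  carrier := {F | F.map (Pi.evalRingHom (fun _ => ℝ) c) = 0 ∧ MM Vstar X₀ (polyField c δ F)}
  zero_mem' := by
    refine ⟨Polynomial.map_zero _, ?_⟩
    convert hc.zero using 1
    funext x
    simp [polyField]
  add_mem' := by
    rintro F H ⟨hFc, hF⟩ ⟨hHc, hH⟩
    refine ⟨by rw [Polynomial.map_add, hFc, hHc, add_zero], ?_⟩
    convert hF.add hH using 1
    funext x
    simp [polyField]
  smul_mem' := by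
    rintro r F ⟨hFc, hF⟩
    refine ⟨?_, ?_⟩
    · ext n
      have hcoeff : F.coeff n c = 0 := by simpa using congrArg (fun p => p.coeff n) hFc
      simp [hcoeff]
    · convert hF.smul r using 1
      funext x
      simp [polyField]

theorem isDerivClosed_fieldSpace {γ : V → ℝ} {Φ : (V → ℝ) → V → ℝ} (hΦ : Differentiable ℝ Φ)
    (δ : V → ℝ) (hc : Controllable Vstar (dampedField γ Φ) c) :
    IsDerivClosed (fieldSpace δ hc.2) where
  derivative_mem F hF := by
    refine ⟨by rw [← derivative_map, hF.1, derivative_zero], ?_⟩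
    exact lieB_dq_polyField δ hF.1 ▸ hc.1.lie hF.2
  derivative_mul_mem F hF H hH := by
    refine ⟨by rw [← derivative_map, Polynomial.map_mul, hF.1, zero_mul, derivative_zero], ?_⟩
    exact lieB_polyField_lieB_dampedField γ δ hF.1 hH.1 hΦ ▸ hF.2.lie hH.2.lieX

theorem dpSum_mem_of_C_indicator_mem {δ : V → ℝ} {hc : MM Vstar X₀ (dp c)} {A : Finset V}
    (hA : C ((A : Set V).indicator 1) ∈ fieldSpace δ hc) : MM Vstar X₀ (dpSum A) := by
  convert hA.2 using 1
  funext x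
  ext v
  · simp [dpSum, polyField]
  · simp [dpSum, polyField, Finset.sum_apply, Pi.single_apply, Set.indicator_apply]

end FieldSpace

section Network

variable {V : Type} [Fintype V] [DecidableEq V] (G : SimpleGraph V) [DecidableRel G.Adj]
  (γ : V → ℝ) (U : V → ℝ → ℝ) (Vp : V → V → ℝ[X])

/-- Minus the force of the pinning and interaction potentials. -/
def potentialGradient : (V → ℝ) → V → ℝ := fun q v =>
  deriv (U v) (q v) + ∑ w ∈ Tset G v, (derivative (Vp v w)).eval (q v - q w)

theorem X0_eq_dampedField : X0 G γ U Vp = dampedField γ (potentialGradient G U Vp) := by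
  funext x
  ext v
  · rfl
  · exact sub_sub _ _ _

/-- The derivative of `potentialGradient`, a matrix supported on the diagonal and the edges. -/
def potentialHessian (q : V → ℝ) : (V → ℝ) →L[ℝ] V → ℝ :=
  ContinuousLinearMap.pi fun v =>
    deriv (deriv (U v)) (q v) • ContinuousLinearMap.proj (R := ℝ) (φ := fun _ : V => ℝ) v +
      ∑ w ∈ Tset G v, (derivative (derivative (Vp v w))).eval (q v - q w) •
        (ContinuousLinearMap.proj (R := ℝ) (φ := fun _ : V => ℝ) v - ContinuousLinearMap.proj w)

/-- The diagonal entry of the Hessian at `c`. -/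
def localStiffness (c : V) (q : V → ℝ) : ℝ :=
  deriv (deriv (U c)) (q c) + ∑ w ∈ Tset G c, (derivative (derivative (Vp c w))).eval (q c - q w)

theorem potentialHessian_single_self (c : V) (q : V → ℝ) :
    potentialHessian G U Vp q (Pi.single c 1) c = localStiffness G U Vp c q := by
  simp only [potentialHessian, localStiffness, ContinuousLinearMap.coe_pi', add_apply, smul_apply,
    ContinuousLinearMap.proj_apply, Pi.single_eq_same, smul_eq_mul, mul_one, sum_apply, sub_apply,
    add_right_inj]
  refine Finset.sum_congr rfl fun w hw => ?_
  have hne : w ≠ c := (G.ne_of_adj (Finset.mem_filter.1 hw).2).symm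
  simp [hne]

theorem potentialHessian_single_of_ne {c v : V} (hv : v ≠ c) (q : V → ℝ) :
    potentialHessian G U Vp q (Pi.single c 1) v =
      if v ∈ Tset G c then -(derivative (derivative (Vp v c))).eval (q v - q c) else 0 := by
  by_cases hadj : G.Adj c v <;>
    simp [potentialHessian, hv, hadj, Tset, Pi.single_apply, G.adj_comm v]

variable {U}

theorem hasFDerivAt_potentialGradient (hU : ∀ v, Differentiable ℝ (deriv (U v))) (q : V → ℝ) :
    HasFDerivAt (potentialGradient G U Vp) (potentialHessian G U Vp q) q := by
  have hproj (v : V) : HasFDerivAt (fun q : V → ℝ => q v)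
      (ContinuousLinearMap.proj (R := ℝ) (φ := fun _ : V => ℝ) v) q :=
    hasFDerivAt_apply v q
  refine hasFDerivAt_pi.2 fun v => HasFDerivAt.add ?_ (HasFDerivAt.fun_sum fun w _ => ?_)
  · exact (hU v (q v)).hasDerivAt.comp_hasFDerivAt q (hproj v)
  · exact ((derivative (Vp v w)).hasDerivAt _).comp_hasFDerivAt q
      ((hproj v).fun_sub (hproj w))

theorem differentiable_potentialGradient (hU : ∀ v, Differentiable ℝ (deriv (U v))) :
    Differentiable ℝ (potentialGradient G U Vp) := fun q =>
  (hasFDerivAt_potentialGradient G Vp hU q).differentiableAt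

theorem contDiff_localStiffness {c : V} (hU : ContDiff ℝ (⊤ : ℕ∞) (U c)) :
    ContDiff ℝ (⊤ : ℕ∞) (localStiffness G U Vp c) := by
  have hU'' : ContDiff ℝ (⊤ : ℕ∞) (deriv (deriv (U c))) :=
    (contDiff_infty_iff_deriv.1 (contDiff_infty_iff_deriv.1 hU).2).2
  have heval (p : ℝ[X]) : ContDiff ℝ (⊤ : ℕ∞) fun x => p.eval x := by
    simpa only [coe_aeval_eq_eval] using p.contDiff_aeval (𝕜 := ℝ) (⊤ : ℕ∞)
  refine (hU''.comp (contDiff_apply ℝ ℝ c)).add (ContDiff.sum fun w _ => ?_)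
  exact (heval _).comp ((contDiff_apply ℝ ℝ c).sub (contDiff_apply ℝ ℝ w))

variable {Vp} {c : V}

/-- The adjusted representatives of the second derivatives of the interactions with `c`. -/
def adjustedTuple (Vp : V → V → ℝ[X]) (c : V) : V → ℝ[X] :=
  (Tset G c : Set V).indicator (ft Vp c)

theorem polyField_adjustedTuple_eq (hU : ∀ v, Differentiable ℝ (deriv (U v)))
    (hsym : ∀ v, G.Adj c v → ∀ x : ℝ, (Vp v c).eval x = (Vp c v).eval (-x)) :
    polyField c (fun v => adjShift (derivative (derivative (Vp c v))))
        (tuplePoly (adjustedTuple G Vp c)) =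
      lieB (dq c) (dampedField γ (potentialGradient G U Vp)) +
        fun x => localStiffness G U Vp c x.1 • dp c x := by
  rw [lieB_dq_dampedField γ (hasFDerivAt_potentialGradient G Vp hU)]
  funext x
  ext v
  · simp [polyField, dp]
  rcases eq_or_ne v c with rfl | hv
  · simp [polyField, eval_tuplePoly, adjustedTuple, Tset, dp,
      potentialHessian_single_self]
  by_cases hadj : G.Adj c v
  · simp [polyField, eval_tuplePoly, adjustedTuple, Tset, dp, hv, hadj, gap_apply, ft, eval_adjRep,
      potentialHessian_single_of_ne G U Vp hv,
      eval_derivative_derivative_of_eval_eq_eval_neg (hsym v hadj)]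
  · simp [polyField, eval_tuplePoly, adjustedTuple, Tset, dp, hv, hadj,
      potentialHessian_single_of_ne G U Vp hv]

theorem tuplePoly_adjustedTuple_mem_fieldSpace (hU : ∀ v, Differentiable ℝ (deriv (U v)))
    (hUc : ContDiff ℝ (⊤ : ℕ∞) (U c))
    (hsym : ∀ v, G.Adj c v → ∀ x : ℝ, (Vp v c).eval x = (Vp c v).eval (-x))
    {Vstar : Finset V}
    (hc : Controllable Vstar (dampedField γ (potentialGradient G U Vp)) c) :
    tuplePoly (adjustedTuple G Vp c) ∈
      fieldSpace (fun v => adjShift (derivative (derivative (Vp c v)))) hc.2 := by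
  refine ⟨by simp [map_tuplePoly, adjustedTuple, Tset], ?_⟩
  rw [polyField_adjustedTuple_eq G γ hU hsym]
  exact hc.1.lieX.add (hc.2.mulS _ ((contDiff_localStiffness G Vp hUc).comp contDiff_fst))

theorem isAdjusted_adjustedTuple (hdeg : ∀ v, G.Adj c v → 3 ≤ (Vp c v).natDegree) (v : V) :
    IsAdjusted (adjustedTuple G Vp c v) := by
  by_cases hv : v ∈ Tset G c
  · rw [adjustedTuple, Set.indicator_of_mem (Finset.mem_coe.2 hv)]
    exact isAdjusted_adjRep (one_le_natDegree_derivative_derivative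
      (hdeg v (Finset.mem_filter.1 hv).2))
  · rw [adjustedTuple, Set.indicator_of_notMem (Finset.mem_coe.not.2 hv), IsAdjusted, coeff_zero]

theorem adjustedTuple_ne_zero (hdeg : ∀ v, G.Adj c v → 3 ≤ (Vp c v).natDegree) {v : V}
    (hv : v ∈ Tset G c) : adjustedTuple G Vp c v ≠ 0 := by
  rw [adjustedTuple, Set.indicator_of_mem (Finset.mem_coe.2 hv)]
  refine ne_zero_of_natDegree_gt (n := 0) ?_
  rw [ft, natDegree_adjRep]
  exact one_le_natDegree_derivative_derivative (hdeg v (Finset.mem_filter.1 hv).2)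

theorem coe_filter_polyEquiv_eq (hdeg : ∀ v, G.Adj c v → 3 ≤ (Vp c v).natDegree) {v₀ : V}
    (hv₀ : v₀ ∈ Tset G c) :
    ((Tset G c).filter fun w => PolyEquiv (derivative (derivative (Vp c w)))
        (derivative (derivative (Vp c v₀))) : Set V) =
      {v | adjustedTuple G Vp c v = adjustedTuple G Vp c v₀} := by
  have hne := adjustedTuple_ne_zero G hdeg hv₀
  have hequiv (w : V) : PolyEquiv (derivative (derivative (Vp c w)))
      (derivative (derivative (Vp c v₀))) ↔ ft Vp c w = ft Vp c v₀ :=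
    polyEquiv_iff_adjRep_eq (one_le_natDegree_derivative_derivative
      (hdeg v₀ (Finset.mem_filter.1 hv₀).2))
  ext w
  by_cases hw : w ∈ Tset G c
  · simp [adjustedTuple, hw, hv₀, hequiv]
  · have hw_zero : adjustedTuple G Vp c w = 0 :=
      Set.indicator_of_notMem (Finset.mem_coe.not.2 hw) _
    simp [hw, hw_zero, hne.symm]

end Network

theorem equivClass_jointly_controllable_general
    {V : Type} [Fintype V] [DecidableEq V] (G : SimpleGraph V) [DecidableRel G.Adj]
    (Vstar : Finset V) (γ : V → ℝ) (U : V → ℝ → ℝ) (Vp : V → V → Polynomial ℝ) (c : V)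
    (hU : ∀ v, Differentiable ℝ (deriv (U v))) (hUc : ContDiff ℝ (⊤ : ℕ∞) (U c))
    (hsym : ∀ v, G.Adj c v → ∀ x : ℝ, (Vp v c).eval x = (Vp c v).eval (-x))
    (hdeg : ∀ v, G.Adj c v → 3 ≤ (Vp c v).natDegree)
    (hc : Controllable Vstar (X0 G γ U Vp) c) :
    ∀ v₀ ∈ Tset G c,
      MM Vstar (X0 G γ U Vp)
        (dpSum ((Tset G c).filter fun w =>
          PolyEquiv (derivative (derivative (Vp c w))) (derivative (derivative (Vp c v₀))))) := by
  intro v₀ hv₀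
  rw [X0_eq_dampedField] at hc ⊢
  have hclosed := isDerivClosed_fieldSpace (differentiable_potentialGradient G Vp hU)
    (fun v => adjShift (derivative (derivative (Vp c v)))) hc
  have hmem := tuplePoly_adjustedTuple_mem_fieldSpace G γ hU hUc hsym hc
  obtain ⟨d, hd⟩ := (Set.finite_range fun v => (adjustedTuple G Vp c v).natDegree).bddAbove
  have hclass := hclosed.indicator_class_mem hmem (isAdjusted_adjustedTuple G hdeg)
    (fun v => hd (Set.mem_range_self v)) (adjustedTuple_ne_zero G hdeg hv₀)
  rw [← coe_filter_polyEquiv_eq G hdeg hv₀] at hclass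
  exact dpSum_mem_of_C_indicator_mem (hclosed.C_mem hclass)

/-- Theorem 4.3, first part. If `c` is controllable, then each
equivalence class `𝒯_i` of neighbors of `c` (the class of `v₀ ∈ 𝒯` consists of those
`w ∈ 𝒯` whose `V''_{cw}` is equivalent to `V''_{cv₀}`) is jointly controllable. -/
theorem equivClass_jointly_controllable
    {V : Type} [Fintype V] [DecidableEq V] (G : SimpleGraph V) [DecidableRel G.Adj]
    (Vstar : Finset V) (γ : V → ℝ) (U : V → ℝ → ℝ) (Vp : V → V → Polynomial ℝ)
    (hγpos : ∀ v ∈ Vstar, 0 < γ v) (hγ0 : ∀ v ∉ Vstar, γ v = 0)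
    (hU : ∀ v, ContDiff ℝ (⊤ : ℕ∞) (U v))
    (hsym : ∀ u v, G.Adj u v → ∀ x : ℝ, (Vp v u).eval x = (Vp u v).eval (-x))
    (hdeg : ∀ u v, G.Adj u v → 3 ≤ (Vp u v).natDegree)
    (c : V) (hc : Controllable Vstar (X0 G γ U Vp) c) :
    ∀ v₀ ∈ Tset G c,
      MM Vstar (X0 G γ U Vp)
        (dpSum ((Tset G c).filter fun w =>
          PolyEquiv (derivative (derivative (Vp c w))) (derivative (derivative (Vp c v₀))))) := by
  exact equivClass_jointly_controllable_general G Vstar γ U Vp c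
    (fun v => (contDiff_infty_iff_deriv.1 (hU v)).2.differentiable (by simp)) (hU c) (hsym c)
    (hdeg c) hc
end
end

section
/- Assume the vertex c is controllable. Then the vector field ∑_{v∈𝒯} V''_{cv}(q_c − q_v) ∂_{p_v} belongs to 𝓜. -/
/-! Since `∂_{q_c}` is constant, `[∂_{q_c}, X₀]` is the derivative of `X₀` in the direction `q_c`,
that is, minus the `q_c`-column of the Hessian of the potential energy, carried by the `∂_{p_v}`.
The off-diagonal entries of this column are `-V''_{vc}(q_v − q_c) = -V''_{cv}(q_c − q_v)` at the
neighbors `v` of `c` and `0` elsewhere. The diagonal entry is a smooth function, so, `∂_{p_c}` being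
in `𝓜`, its contribution can be added back. -/

open scoped Classical
open Polynomial

noncomputable section

section Polynomial

variable {R : Type*} [CommRing R] [IsDomain R] [Infinite R]

lemma eval_derivative_derivative_of_eval_eq_eval_neg_s3 {P Q : R[X]}
    (h : ∀ x, Q.eval x = P.eval (-x)) (x : R) :
    (derivative (derivative Q)).eval x = (derivative (derivative P)).eval (-x) := by
  have hQ : Q = P.comp (-X) := Polynomial.funext fun y => by simp [h]
  simp [hQ, derivative_comp]

end Polynomial

section Neighbors

variable {V : Type} [Fintype V] [DecidableEq V] (G : SimpleGraph V) [DecidableRel G.Adj]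

lemma sum_Tset_single_apply {M : Type*} [AddCommMonoid M] (c v : V) (a : V → M) :
    (∑ w ∈ Tset G c, Pi.single w (a w) : V → M) v = if G.Adj c v then a v else 0 := by
  simp [Tset, Finset.sum_apply, Pi.single_apply]

lemma sum_Tset_mul_single_sub_single {R : Type*} [NonAssocRing R] (c v : V) (a : V → R) :
    ∑ w ∈ Tset G v, a w * ((Pi.single c 1 : V → R) v - (Pi.single c 1 : V → R) w) =
      (∑ w ∈ Tset G v, a w) * (Pi.single c 1 : V → R) v - if G.Adj c v then a c else 0 := by
  simp [mul_sub, Pi.single_apply, Tset, G.adj_comm c v]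

end Neighbors

section Drift

variable {V : Type}

/-- The coordinate `q_v` as a continuous linear functional on phase space, for writing down the
derivative of the drift. -/
def positionCLM (v : V) : Phase V →L[ℝ] ℝ :=
  .proj v ∘L .fst ℝ (V → ℝ) (V → ℝ)

/-- The coordinate `p_v` as a continuous linear functional on phase space, for writing down the
derivative of the drift. -/
def momentumCLM (v : V) : Phase V →L[ℝ] ℝ :=
  .proj v ∘L .snd ℝ (V → ℝ) (V → ℝ)

lemma lieB_const_left [Fintype V] (y : Phase V) (Z : Phase V → Phase V) (x : Phase V) :
    lieB (fun _ => y) Z x = fderiv ℝ Z x y := by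
  simp [lieB]

variable [Fintype V] [DecidableEq V] (G : SimpleGraph V) [DecidableRel G.Adj]
  (γ : V → ℝ) (U : V → ℝ → ℝ) (Vp : V → V → Polynomial ℝ)

lemma hasFDerivAt_X0_snd_apply {v : V} {x : Phase V}
    (hU : DifferentiableAt ℝ (deriv (U v)) (x.1 v)) :
    HasFDerivAt (fun y => (X0 G γ U Vp y).2 v)
      (-γ v • momentumCLM v - deriv (deriv (U v)) (x.1 v) • positionCLM v -
        ∑ w ∈ Tset G v, (derivative (derivative (Vp v w))).eval (x.1 v - x.1 w) •
          (positionCLM v - positionCLM w)) x := by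
  have pinning : HasFDerivAt (fun y : Phase V => deriv (U v) (y.1 v))
      (deriv (deriv (U v)) (x.1 v) • positionCLM v) x :=
    hU.hasDerivAt.comp_hasFDerivAt (f := positionCLM v) x (positionCLM v).hasFDerivAt
  have interaction (w : V) : HasFDerivAt
      (fun y : Phase V => (derivative (Vp v w)).eval (y.1 v - y.1 w))
      ((derivative (derivative (Vp v w))).eval (x.1 v - x.1 w) •
        (positionCLM v - positionCLM w)) x :=
    ((derivative (Vp v w)).hasDerivAt _).comp_hasFDerivAt x
      (positionCLM v - positionCLM w).hasFDerivAt
  exact (((momentumCLM v).hasFDerivAt.const_mul (-γ v)).sub pinning).sub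
    (.fun_sum fun w _ => interaction w)

lemma fderiv_X0_apply {x : Phase V}
    (hU : ∀ v, DifferentiableAt ℝ (deriv (U v)) (x.1 v)) (y : Phase V) :
    fderiv ℝ (X0 G γ U Vp) x y =
      (y.2, fun v => -γ v * y.2 v - deriv (deriv (U v)) (x.1 v) * y.1 v -
        ∑ w ∈ Tset G v,
          (derivative (derivative (Vp v w))).eval (x.1 v - x.1 w) * (y.1 v - y.1 w)) := by
  have h : HasFDerivAt (X0 G γ U Vp) _ x := hasFDerivAt_snd.prodMk
    (hasFDerivAt_pi.2 fun v => hasFDerivAt_X0_snd_apply G γ U Vp (hU v))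
  rw [h.fderiv]
  ext v <;> simp [positionCLM, momentumCLM]

/-- The second derivative in `q_c` of the potential energy, which is minus the
`∂_{p_c}`-coefficient of `[∂_{q_c}, X₀]`. -/
def stiffness (c : V) : Phase V → ℝ :=
  fun x => deriv (deriv (U c)) (x.1 c) +
    ∑ w ∈ Tset G c, (derivative (derivative (Vp c w))).eval (x.1 c - x.1 w)

lemma contDiff_stiffness {c : V} (hU : ContDiff ℝ (⊤ : ℕ∞) (U c)) :
    ContDiff ℝ (⊤ : ℕ∞) (stiffness G U Vp c) := by
  have hU'' : ContDiff ℝ (⊤ : ℕ∞) (deriv (deriv (U c))) :=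
    (contDiff_infty_iff_deriv.1 (contDiff_infty_iff_deriv.1 hU).2).2
  have hq (v : V) : ContDiff ℝ (⊤ : ℕ∞) fun x : Phase V => x.1 v := (positionCLM v).contDiff
  refine (hU''.comp (hq c)).add (.sum fun w _ => ?_)
  simpa only [Function.comp_def, coe_aeval_eq_eval] using
    ((derivative (derivative (Vp c w))).contDiff_aeval _).comp ((hq c).sub (hq w))

lemma lieB_dq_X0 {x : Phase V}
    (hU : ∀ v, DifferentiableAt ℝ (deriv (U v)) (x.1 v)) (c : V) :
    lieB (dq c) (X0 G γ U Vp) x =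
      (0, ∑ w ∈ Tset G c,
        Pi.single w ((derivative (derivative (Vp w c))).eval (x.1 w - x.1 c))) -
      stiffness G U Vp c x • dp c x := by
  unfold dq
  rw [lieB_const_left, fderiv_X0_apply G γ U Vp hU]
  refine Prod.ext (by simp [dp]) (funext fun v => ?_)
  simp only [dp, Prod.snd_sub, Prod.smul_snd, Pi.sub_apply, Pi.smul_apply, smul_eq_mul,
    sum_Tset_single_apply, sum_Tset_mul_single_sub_single]
  rcases eq_or_ne v c with rfl | hv
  · simp only [stiffness, Pi.zero_apply]
    ring
  · simp [hv]

end Drift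

theorem second_derivative_field_mem_general
    {V : Type} [Fintype V] [DecidableEq V] (G : SimpleGraph V) [DecidableRel G.Adj]
    (Vstar : Finset V) (γ : V → ℝ) (U : V → ℝ → ℝ) (Vp : V → V → Polynomial ℝ)
    (hU : ∀ v, ContDiff ℝ (⊤ : ℕ∞) (U v)) (c : V)
    (hsym : ∀ v, G.Adj c v → ∀ x : ℝ, (Vp v c).eval x = (Vp c v).eval (-x))
    (hc : Controllable Vstar (X0 G γ U Vp) c) :
    MM Vstar (X0 G γ U Vp)
      (fun x => ((0 : V → ℝ),
        ∑ w ∈ Tset G c,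
          Pi.single w ((derivative (derivative (Vp c w))).eval (x.1 c - x.1 w)))) := by
  have hU' (v : V) : Differentiable ℝ (deriv (U v)) :=
    (contDiff_infty_iff_deriv.1 (hU v)).2.differentiable (by simp)
  have hV'' (x : Phase V) (w : V) (hw : w ∈ Tset G c) :
      (derivative (derivative (Vp w c))).eval (x.1 w - x.1 c) =
        (derivative (derivative (Vp c w))).eval (x.1 c - x.1 w) := by
    rw [eval_derivative_derivative_of_eval_eq_eval_neg_s3 (hsym w (Finset.mem_filter.1 hw).2),
      neg_sub]
  obtain ⟨hq, hp⟩ := hc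
  convert hq.lieX.add (hp.mulS _ (contDiff_stiffness G U Vp (hU c))) using 2 with x
  rw [Pi.add_apply, lieB_dq_X0 G γ U Vp fun v => hU' v (x.1 v), sub_add_cancel,
    Finset.sum_congr rfl fun w hw => congrArg (Pi.single w) (hV'' x w hw)]

/-- Lemma 4.4. If `c` is controllable, then
`∑_{v∈𝒯} V''_{cv}(q_c − q_v) ∂_{p_v} ∈ 𝓜`. -/
theorem second_derivative_field_mem
    {V : Type} [Fintype V] [DecidableEq V] (G : SimpleGraph V) [DecidableRel G.Adj]
    (Vstar : Finset V) (γ : V → ℝ) (U : V → ℝ → ℝ) (Vp : V → V → Polynomial ℝ)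
    (hγpos : ∀ v ∈ Vstar, 0 < γ v) (hγ0 : ∀ v ∉ Vstar, γ v = 0)
    (hU : ∀ v, ContDiff ℝ (⊤ : ℕ∞) (U v))
    (hsym : ∀ u v, G.Adj u v → ∀ x : ℝ, (Vp v u).eval x = (Vp u v).eval (-x))
    (hdeg : ∀ u v, G.Adj u v → 3 ≤ (Vp u v).natDegree)
    (c : V) (hc : Controllable Vstar (X0 G γ U Vp) c) :
    MM Vstar (X0 G γ U Vp)
      (fun x => ((0 : V → ℝ),
        ∑ w ∈ Tset G c,
          Pi.single w ((derivative (derivative (Vp c w))).eval (x.1 c - x.1 w)))) :=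
  second_derivative_field_mem_general G Vstar γ U Vp hU c (hsym c) hc
end
end
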